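/- Let K be a field of characteristic zero and let L be a finite-dimensional Lie algebra over K such that the second Chevalley–Eilenberg cohomology group H^2(L,V) vanishes for every finite-dimensional L-module V. Then L is one of the following: (1) a one-dimensional Lie algebra; (2) a semisimple Lie algebra; (3) the direct sum (as Lie algebras) of a semisimple Lie algebra and a one-dimensional Lie algebra. -/

import Mathlib

universe u v

section TwoCohomology

variable (K : Type u) [Field K]
variable (L : Type v) [LieRing L] [LieAlgebra K L]

/-- `f` is an alternating bilinear 2-cocycle on `L` with values in the `L`-module `V`:
it satisfies `f a a = 0` and the Chevalley–Eilenberg 2-cocycle identity. -/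
def IsLieTwoCocycle {V : Type*} [AddCommGroup V] [Module K V] [LieRingModule L V]
    (f : L →ₗ[K] L →ₗ[K] V) : Prop :=
  (∀ a : L, f a a = 0) ∧
    ∀ x y z : L,
      ⁅x, f y z⁆ - ⁅y, f x z⁆ + ⁅z, f x y⁆ - f ⁅x, y⁆ z + f ⁅x, z⁆ y - f ⁅y, z⁆ x = 0

/-- `f` is a 2-coboundary: `f (x, y) = x · g y − y · g x − g ⁅x, y⁆` for some linear `g`. -/
def IsLieTwoCoboundary {V : Type*} [AddCommGroup V] [Module K V] [LieRingModule L V]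
    (f : L →ₗ[K] L →ₗ[K] V) : Prop :=
  ∃ g : L →ₗ[K] V, ∀ x y : L, f x y = ⁅x, g y⁆ - ⁅y, g x⁆ - g ⁅x, y⁆

/-- A finite-dimensional Lie algebra `L` is 2-trivial if `H²(L,V) = 0`, i.e. every
alternating 2-cocycle is a 2-coboundary, for every finite-dimensional `L`-module `V`. -/
def IsTwoTrivial : Prop :=
  ∀ (V : Type u) [AddCommGroup V] [Module K V] [LieRingModule L V] [LieModule K L V]
    [FiniteDimensional K V] (f : L →ₗ[K] L →ₗ[K] V),
      IsLieTwoCocycle K L f → IsLieTwoCoboundary K L f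

end TwoCohomology

/-!
Over a 2-trivial `L`, the kernel `J` of a nonzero character `χ` is perfect: `χ ∧ q` is a cocycle,
where `q : L → L ⧸ ⁅J, J⁆` is the quotient map, and a primitive of it provides an operator on
`J / ⁅J, J⁆` whose commutator with the action of an element `t` with `χ t = 1` is the identity;
taking traces, `J / ⁅J, J⁆ = 0`.

Let `c`, `g` be 1-cocycles with values in an integral domain on which `L` acts by derivations.
Then `c ∧ g` is a cocycle, hence `c ∧ g = dg₁`, `c ∧ g₁ = dg₂`, and so on. On an ideal `N` acting
trivially, these equations evaluated along the iterated brackets `⁅n, ⁅n, …, ⁅n, m⁆⁆⁆` contradict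
`dim L < ∞` unless `c ∧ g` vanishes on `N`. Applied to the symmetric algebra of `E ⊕ E`, this
shows that a 1-cocycle `γ` with values in a module `E` on which `N` acts trivially has rank at
most one on `N`, so that `L` acts on `γ N` through scalars and `γ` kills `⁅⁅L, L⁆, N⁆`. For the
cocycle in `Hom(L / N, N / ⁅N, N⁆)` that is the obstruction to an `L`-equivariant projection
`L → N / ⁅N, N⁆` this gives `⁅D, N⁆ = ⁅N, N⁆` for every perfect ideal `D` containing `N`.

Let now `D` be `L` if `L` is perfect, and the kernel of a nonzero character otherwise, and let
`N` be the intersection of `D` with the radical `R`. Then `D / ⁅N, N⁆` is a perfect central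
extension of the semisimple Lie algebra `D / N ≅ L / R`. By the second Whitehead lemma with trivial
coefficients its kernel `N / ⁅N, N⁆` is zero. As `N` is solvable, `N = 0`.
-/

section Ideals

open LieAlgebra LieSubmodule

attribute [local instance 100] LieRing.ofAssociativeRing

variable {K L U : Type*} [CommRing K] [LieRing L] [LieAlgebra K L]
  [AddCommGroup U] [Module K U] [LieRingModule L U] [LieModule K L U]

theorem toSubmodule_lie_le_iff {I : LieIdeal K L} {N : LieSubmodule K L U} {p : Submodule K U} :
    (⁅I, N⁆ : LieSubmodule K L U).toSubmodule ≤ p ↔ ∀ x ∈ I, ∀ m ∈ N, ⁅x, m⁆ ∈ p := by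
  rw [lieIdeal_oper_eq_linear_span', Submodule.span_le]
  refine ⟨fun h x hx m hm => h ⟨x, hx, m, hm, rfl⟩, ?_⟩
  rintro h _ ⟨x, hx, m, hm, rfl⟩
  exact h x hx m hm

theorem lie_lie_le_iff {I J N P : LieIdeal K L} :
    ⁅⁅I, J⁆, N⁆ ≤ P ↔ ∀ x ∈ I, ∀ y ∈ J, ∀ n ∈ N, ⁅⁅x, y⁆, n⁆ ∈ P := by
  refine ⟨fun h x hx y hy n hn => h (lie_mem_lie (lie_mem_lie hx hy) hn), fun h => ?_⟩
  refine (lie_le_iff _ _ _).2 fun d hd n hn => ?_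
  let p : Submodule K L := P.toSubmodule.comap ((LieModule.toEnd K L L).toLinearMap.flip n)
  exact toSubmodule_lie_le_iff (p := p).2 (fun x hx y hy => h x hx y hy n hn) hd

/-- The quotient map by an ideal as a homomorphism of Lie algebras. -/
def quotientHom (I : LieIdeal K L) : L →ₗ⁅K⁆ L ⧸ I :=
  { (LieSubmodule.Quotient.mk' I : L →ₗ[K] L ⧸ I) with map_lie' := rfl }

theorem quotientHom_surjective (I : LieIdeal K L) : Function.Surjective (quotientHom I) :=
  LieSubmodule.Quotient.surjective_mk' I

theorem quotientHom_eq_zero_iff {I : LieIdeal K L} {x : L} : quotientHom I x = 0 ↔ x ∈ I :=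
  LieSubmodule.Quotient.mk_eq_zero I

theorem isSolvable_of_lie_self_le {I J : LieIdeal K L} [IsSolvable J] (h : ⁅I, I⁆ ≤ J) :
    IsSolvable I := by
  obtain ⟨k, hk⟩ := IsSolvable.solvable K J
  refine IsSolvable.mk (R := K) (k := k + 1) ?_
  rw [LieIdeal.derivedSeries_eq_bot_iff] at hk ⊢
  rw [derivedSeriesOfIdeal_add, _root_.eq_bot_iff, ← hk]
  exact derivedSeriesOfIdeal_mono h k

theorem eq_bot_of_isSolvable_of_le_lie_self {N : LieIdeal K L} [IsSolvable N] (h : N ≤ ⁅N, N⁆) :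
    N = ⊥ := by
  obtain ⟨k, hk⟩ := IsSolvable.solvable K N
  rw [LieIdeal.derivedSeries_eq_bot_iff] at hk
  have le_derivedSeries (k : ℕ) : N ≤ derivedSeriesOfIdeal K L k N := by
    induction k with
    | zero => exact le_rfl
    | succ k ih =>
      rw [derivedSeriesOfIdeal_succ]
      exact h.trans (mono_lie ih ih)
  exact _root_.eq_bot_iff.2 (hk ▸ le_derivedSeries k)

theorem lie_top_top_eq_top_of_le_lie_self {D : LieIdeal K L} (hD : D ≤ ⁅D, D⁆) :
    ⁅(⊤ : LieIdeal K D), (⊤ : LieIdeal K D)⁆ = ⊤ := by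
  have derived_eq := D.derivedSeries_eq_derivedSeriesOfIdeal_comap 1
  rw [derivedSeries_def, derivedSeriesOfIdeal_succ, derivedSeriesOfIdeal_succ,
    derivedSeriesOfIdeal_zero, derivedSeriesOfIdeal_zero] at derived_eq
  rw [derived_eq, _root_.eq_top_iff]
  exact fun x _ => hD x.2

theorem lie_top_top_eq_top_of_isSemisimple [IsSemisimple K L] :
    ⁅(⊤ : LieIdeal K L), (⊤ : LieIdeal K L)⁆ = ⊤ := by
  obtain ⟨C, hC⟩ := exists_isCompl ⁅(⊤ : LieIdeal K L), (⊤ : LieIdeal K L)⁆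
  have C_abelian : IsLieAbelian C := by
    rw [lie_abelian_iff_lie_self_eq_bot, _root_.eq_bot_iff, ← hC.inf_eq_bot]
    exact le_inf (mono_lie le_top le_top) (lie_le_right C C)
  have C_eq_bot : C = ⊥ := HasTrivialRadical.eq_bot_of_isSolvable C
  simpa [C_eq_bot] using hC.sup_eq_top

instance hasTrivialRadical_quotient_radical [IsNoetherian K L] :
    HasTrivialRadical K (L ⧸ radical K L) := by
  refine (hasTrivialRadical_iff_no_abelian_ideals K _).2 fun J hJ => ?_
  let π := quotientHom (radical K L)
  have comap_solvable : IsSolvable (J.comap π) := isSolvable_of_lie_self_le (J := radical K L) <| by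
    refine (LieIdeal.comap_bracket_le π).trans fun x hx => ?_
    rw [(lie_abelian_iff_lie_self_eq_bot J).1 hJ] at hx
    exact quotientHom_eq_zero_iff.1 hx
  refine (LieSubmodule.eq_bot_iff J).2 ((quotientHom_surjective _).forall.2 fun x hx => ?_)
  exact quotientHom_eq_zero_iff.2 ((LieIdeal.solvable_iff_le_radical K L _).1 comap_solvable hx)

end Ideals

section Modules

variable {K L U W : Type*} [CommRing K] [LieRing L] [LieAlgebra K L]
  [AddCommGroup U] [Module K U] [LieRingModule L U] [LieModule K L U]
  [AddCommGroup W] [Module K W] [LieRingModule L W] [LieModule K L W]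

/-- The linear maps that vanish on `N` and take values in `X`, as a submodule of all linear
maps. -/
def homLieSubmodule (N : LieSubmodule K L U) (X : LieSubmodule K L W) :
    LieSubmodule K L (U →ₗ[K] W) where
  carrier := {f | (∀ n ∈ N, f n = 0) ∧ ∀ u, f u ∈ X}
  zero_mem' := ⟨fun _ _ => rfl, fun _ => X.zero_mem⟩
  add_mem' hf hg := ⟨fun n hn => by simp [hf.1 n hn, hg.1 n hn],
    fun u => add_mem (hf.2 u) (hg.2 u)⟩
  smul_mem' c f hf := ⟨fun n hn => by simp [hf.1 n hn], fun u => X.smul_mem c (hf.2 u)⟩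
  lie_mem {x f} hf := ⟨fun n hn => by simp [LieHom.lie_apply, hf.1 n hn, hf.1 _ (N.lie_mem hn)],
    fun u => sub_mem (X.lie_mem (hf.2 u)) (hf.2 _)⟩

/-- The push-forward of a 1-cocycle along a homomorphism of modules. -/
def lieDerivationMap (f : U →ₗ⁅K,L⁆ W) (γ : LieDerivation K L U) : LieDerivation K L W where
  toLinearMap := (f : U →ₗ[K] W) ∘ₗ (γ : L →ₗ[K] U)
  leibniz' x y := by simp [LieDerivation.apply_lie_eq_sub]

/-- The 1-cocycle `x ↦ ⁅x, w⁆`, a coboundary in `W` but in general not in its submodule `X`. -/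
def lieDerivationOfLieMem (X : LieSubmodule K L W) (w : W) (hw : ∀ x : L, ⁅x, w⁆ ∈ X) :
    LieDerivation K L X where
  toFun x := ⟨⁅x, w⁆, hw x⟩
  map_add' x y := Subtype.ext (add_lie x y w)
  map_smul' c x := Subtype.ext (smul_lie c x w)
  leibniz' x y := Subtype.ext (lie_lie x y w)

end Modules

section Primitives

attribute [local instance 100] LieRing.ofAssociativeRing

variable {K : Type u} {L : Type v} [Field K] [LieRing L] [LieAlgebra K L]
  {V : Type*} [AddCommGroup V] [Module K V] [LieRingModule L V]

/-- `g` is a primitive of the 2-cochain `f`, that is, `f = dg` for the Chevalley–Eilenberg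
differential `d`. -/
def IsLiePrimitive (f : L →ₗ[K] L →ₗ[K] V) (g : L →ₗ[K] V) : Prop :=
  ∀ x y : L, f x y = ⁅x, g y⁆ - ⁅y, g x⁆ - g ⁅x, y⁆

variable [LieModule K L V]

theorem IsTwoTrivial.exists_isLiePrimitive (h2 : IsTwoTrivial K L) [FiniteDimensional K V]
    {f : L →ₗ[K] L →ₗ[K] V} (hf : IsLieTwoCocycle K L f) :
    ∃ g : L →ₗ[K] V, IsLiePrimitive f g := by
  let n := Module.finrank K V
  let e : V ≃ₗ[K] (Fin n → K) := (Module.finBasis K V).equivFun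
  let ρ : L →ₗ⁅K⁆ Module.End K (Fin n → K) := e.lieConj.toLieHom.comp (LieModule.toEnd K L V)
  let _ := LieRingModule.compLieHom (Fin n → K) ρ
  let _ := LieModule.compLieHom (Fin n → K) ρ
  have lie_e (x : L) (v : V) : ⁅x, e v⁆ = e ⁅x, v⁆ := by
    simp [LieRingModule.compLieHom_apply, ρ, LinearEquiv.conj_apply_apply]
  obtain ⟨g, hg⟩ := h2 (Fin n → K) (f.compr₂ e.toLinearMap) ⟨fun a => by simp [hf.1],
    fun x y z => by
      simpa [lie_e] using congrArg e (hf.2 x y z)⟩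
  refine ⟨e.symm.toLinearMap ∘ₗ g, fun x y => e.injective ?_⟩
  simpa [← lie_e] using hg x y

theorem IsTwoTrivial.exists_isLiePrimitive_mem (h2 : IsTwoTrivial K L)
    (X : LieSubmodule K L V) [FiniteDimensional K X]
    {f : L →ₗ[K] L →ₗ[K] V} (hf : IsLieTwoCocycle K L f) (hfX : ∀ x y, f x y ∈ X) :
    ∃ g : L →ₗ[K] V, IsLiePrimitive f g ∧ ∀ x, g x ∈ X := by
  let fX : L →ₗ[K] L →ₗ[K] X :=
    { toFun x := (f x).codRestrict X (hfX x)
      map_add' x y := by ext; simp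
      map_smul' c x := by ext; simp }
  have coe_fX (x y : L) : (fX x y : V) = f x y := rfl
  obtain ⟨g, hg⟩ := h2.exists_isLiePrimitive (f := fX)
    ⟨fun a => by ext; simp [coe_fX, hf.1], fun x y z => by ext; simp [coe_fX, hf.2]⟩
  exact ⟨(X : Submodule K V).subtype ∘ₗ g, fun x y => congrArg Subtype.val (hg x y),
    fun x => (g x).2⟩

end Primitives

section Wedge

variable {K L A V : Type*} [CommRing K] [AddCommGroup L] [Module K L] [CommRing A] [Algebra K A]
  [AddCommGroup V] [Module K V] [Module A V] [IsScalarTower K A V]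

/-- The wedge product of an `A`-valued 1-cochain with a cochain valued in an `A`-module. -/
def wedge (c : L →ₗ[K] A) (g : L →ₗ[K] V) : L →ₗ[K] L →ₗ[K] V :=
  let B := (Algebra.lsmul K K V).toLinearMap.compl₁₂ c g
  B - B.flip

@[simp]
theorem wedge_apply (c : L →ₗ[K] A) (g : L →ₗ[K] V) (x y : L) :
    wedge c g x y = c x • g y - c y • g x := rfl

end Wedge

section CharacterKernel

open LieAlgebra LieSubmodule

attribute [local instance 100] LieRing.ofAssociativeRing

theorem eq_bot_of_commutator_eq_self {K V : Type*} [Field K] [CharZero K]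
    [AddCommGroup V] [Module K V] (X : Submodule K V) [FiniteDimensional K X]
    (S T : Module.End K V) (hS : ∀ v ∈ X, S v ∈ X) (hT : ∀ v ∈ X, T v ∈ X)
    (hST : ∀ v ∈ X, S (T v) - T (S v) = v) : X = ⊥ := by
  let S' : Module.End K X := S.restrict hS
  let T' : Module.End K X := T.restrict hT
  have commutator_eq_one : S' * T' - T' * S' = 1 := by
    ext v
    exact hST v v.2
  have finrank_eq : (Module.finrank K X : K) = 0 := by
    rw [← LinearMap.trace_one, ← commutator_eq_one, map_sub, LinearMap.trace_mul_comm, sub_self]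
  exact Submodule.finrank_eq_zero.1 (by exact_mod_cast finrank_eq)

variable {K : Type u} {L : Type v} [Field K] [LieRing L] [LieAlgebra K L]

theorem exists_lieCharacter_eq_one {χ : LieCharacter K L} (hχ : χ ≠ 0) : ∃ t, χ t = 1 :=
  LinearMap.surjective (f := (χ : L →ₗ[K] K))
    (fun h => hχ (LieHom.ext fun x => LinearMap.congr_fun h x)) 1

theorem lieCharacter_cyclic_lie_mem (χ : LieCharacter K L) (x y z : L) :
    χ x • ⁅y, z⁆ - χ y • ⁅x, z⁆ + χ z • ⁅x, y⁆ ∈ ⁅χ.ker, χ.ker⁆ := by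
  by_cases hχ : χ = 0
  · simp [hχ]
  obtain ⟨t, ht⟩ := exists_lieCharacter_eq_one hχ
  have lie_mem (a b : L) : ⁅a - χ a • t, b - χ b • t⁆ ∈ ⁅χ.ker, χ.ker⁆ :=
    lie_mem_lie (by simp [ht]) (by simp [ht])
  have shift_by_t : χ x • ⁅y, z⁆ - χ y • ⁅x, z⁆ + χ z • ⁅x, y⁆ =
      χ x • ⁅y - χ y • t, z - χ z • t⁆ - χ y • ⁅x - χ x • t, z - χ z • t⁆
        + χ z • ⁅x - χ x • t, y - χ y • t⁆ := by
    simp only [sub_lie, lie_sub, smul_lie, lie_smul, lie_self]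
    rw [← lie_skew y t]
    module
  rw [shift_by_t]
  exact add_mem (sub_mem (SMulMemClass.smul_mem _ (lie_mem y z))
    (SMulMemClass.smul_mem _ (lie_mem x z))) (SMulMemClass.smul_mem _ (lie_mem x y))

theorem isLieTwoCocycle_wedge_lieCharacter_mk (χ : LieCharacter K L) :
    IsLieTwoCocycle K L (wedge (χ : L →ₗ[K] K)
      (LieSubmodule.Quotient.mk' ⁅χ.ker, χ.ker⁆ : L →ₗ[K] L ⧸ ⁅χ.ker, χ.ker⁆)) := by
  refine ⟨fun a => by simp, fun x y z => ?_⟩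
  set q : L →ₗ⁅K,L⁆ L ⧸ ⁅χ.ker, χ.ker⁆ := LieSubmodule.Quotient.mk' ⁅χ.ker, χ.ker⁆
  have q_cyclic : q (χ x • ⁅y, z⁆ - χ y • ⁅x, z⁆ + χ z • ⁅x, y⁆) = 0 :=
    (LieSubmodule.Quotient.mk_eq_zero _).2 (lieCharacter_cyclic_lie_mem χ x y z)
  rw [map_add, map_sub, map_smul, map_smul, map_smul] at q_cyclic
  have q_skew (a b : L) : q ⁅b, a⁆ = - q ⁅a, b⁆ := by rw [← map_neg, lie_skew]
  simp only [wedge_apply, LieHom.coe_toLinearMap, lieCharacter_apply_lie, zero_smul, lie_sub,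
    lie_smul, LieModuleHom.coe_toLinearMap, ← LieModuleHom.map_lie, q_skew x y, q_skew x z,
    q_skew y z]
  linear_combination (norm := module) -q_cyclic

theorem IsTwoTrivial.ker_lieCharacter_le [CharZero K] [FiniteDimensional K L]
    (h2 : IsTwoTrivial K L) {χ : LieCharacter K L} (hχ : χ ≠ 0) :
    χ.ker ≤ ⁅χ.ker, χ.ker⁆ := by
  obtain ⟨t, ht⟩ := exists_lieCharacter_eq_one hχ
  let q : L →ₗ⁅K,L⁆ L ⧸ ⁅χ.ker, χ.ker⁆ := LieSubmodule.Quotient.mk' ⁅χ.ker, χ.ker⁆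
  let X : LieSubmodule K L (L ⧸ ⁅χ.ker, χ.ker⁆) := LieSubmodule.map q χ.ker
  have lie_eq_zero {y : L} (hy : χ y = 0) {p} (hp : p ∈ X) : ⁅y, p⁆ = 0 := by
    obtain ⟨z, hz, rfl⟩ := hp
    exact (LieSubmodule.Quotient.mk_eq_zero _).2 (lie_mem_lie (LieHom.mem_ker.2 hy) hz)
  obtain ⟨g, hg, hgX⟩ := h2.exists_isLiePrimitive_mem X (isLieTwoCocycle_wedge_lieCharacter_mk χ)
    fun x y => ⟨χ x • y - χ y • x, by simp [mul_comm], rfl⟩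
  have g_lie {a b : L} (ha : χ a = 0) (hb : χ b = 0) : g ⁅a, b⁆ = 0 := by
    simpa [ha, hb, lie_eq_zero ha (hgX b), lie_eq_zero hb (hgX a)] using hg a b
  let G : Module.End K (L ⧸ ⁅χ.ker, χ.ker⁆) := Submodule.liftQ _ g <|
    toSubmodule_lie_le_iff.2 fun a ha b hb => g_lie (LieHom.mem_ker.1 ha) (LieHom.mem_ker.1 hb)
  have X_eq_bot : X.toSubmodule = ⊥ := by
    refine eq_bot_of_commutator_eq_self _ (LieModule.toEnd K L _ t) G
      (fun p hp => X.lie_mem hp) ?_ ?_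
    · rintro _ ⟨z, -, rfl⟩
      exact hgX z
    · rintro _ ⟨z, hz, rfl⟩
      have hz' : χ z = 0 := LieHom.mem_ker.1 hz
      have h := hg t z
      rw [wedge_apply, LieHom.coe_toLinearMap, ht, hz', one_smul, zero_smul, sub_zero,
        lie_eq_zero hz' (hgX t), sub_zero] at h
      exact h.symm
  exact (LieSubmodule.Quotient.map_mk'_eq_bot_le _ _).1 ((toSubmodule_eq_bot X).1 X_eq_bot)

end CharacterKernel

section MasseySequence

variable {K : Type u} {L : Type v} [Field K] [LieRing L] [LieAlgebra K L]

/-- The Lie ring `L` acts on the ring `A` by derivations. -/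
class IsLieActionByDerivations (L A : Type*) [LieRing L] [CommRing A] [LieRingModule L A] :
    Prop where
  lie_mul (x : L) (a b : A) : ⁅x, a * b⁆ = ⁅x, a⁆ * b + a * ⁅x, b⁆

open IsLieActionByDerivations (lie_mul)

/-- The cochain `g` takes its values in a finite-dimensional submodule. This is what makes
2-triviality applicable to cochains valued in an infinite-dimensional module. -/
def IsLocallyFinite {V : Type*} [AddCommGroup V] [Module K V] [LieRingModule L V]
    (g : L →ₗ[K] V) : Prop :=
  ∃ X : LieSubmodule K L V, FiniteDimensional K X ∧ ∀ x, g x ∈ X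

variable {A : Type*} [CommRing A] [Algebra K A] [LieRingModule L A] [LieModule K L A]
  [IsLieActionByDerivations L A]

/-- The product of two submodules of an algebra on which `L` acts by derivations. -/
def lieSubmoduleMul (X Y : LieSubmodule K L A) : LieSubmodule K L A :=
  { X.toSubmodule * Y.toSubmodule with
    lie_mem := by
      intro x p hp
      change p ∈ X.toSubmodule * Y.toSubmodule at hp
      change ⁅x, p⁆ ∈ X.toSubmodule * Y.toSubmodule
      induction hp using Submodule.mul_induction_on' with
      | mem_mul_mem a ha b hb =>
        rw [lie_mul]
        exact add_mem (Submodule.mul_mem_mul (X.lie_mem ha) hb)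
          (Submodule.mul_mem_mul ha (Y.lie_mem hb))
      | add a _ b _ iha ihb =>
        rw [lie_add]
        exact add_mem iha ihb }

theorem isLieTwoCocycle_wedge (c : LieDerivation K L A) {g h : L →ₗ[K] A}
    (hg : IsLiePrimitive (wedge (c : L →ₗ[K] A) h) g) :
    IsLieTwoCocycle K L (wedge (c : L →ₗ[K] A) g) := by
  have g_lie (x y : L) : g ⁅x, y⁆ = ⁅x, g y⁆ - ⁅y, g x⁆ - (c x * h y - c y * h x) := by
    have hxy := hg x y
    simp only [wedge_apply, smul_eq_mul, LieDerivation.coeFn_coe] at hxy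
    rw [hxy, sub_sub_cancel]
  refine ⟨fun a => by simp, fun x y z => ?_⟩
  simp only [wedge_apply, smul_eq_mul, LieDerivation.coeFn_coe, lie_sub, lie_mul, g_lie,
    LieDerivation.apply_lie_eq_sub]
  ring

theorem IsTwoTrivial.exists_isLiePrimitive_wedge (h2 : IsTwoTrivial K L)
    (c : LieDerivation K L A) (hc : IsLocallyFinite (c : L →ₗ[K] A)) {g h : L →ₗ[K] A}
    (hgh : IsLiePrimitive (wedge (c : L →ₗ[K] A) h) g) (hg : IsLocallyFinite g) :
    ∃ g', IsLiePrimitive (wedge (c : L →ₗ[K] A) g) g' ∧ IsLocallyFinite g' := by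
  obtain ⟨X, _, hcX⟩ := hc
  obtain ⟨Y, _, hgY⟩ := hg
  have : FiniteDimensional K (lieSubmoduleMul X Y) :=
    Module.Finite.iff_fg.2 ((Module.Finite.iff_fg.1 ‹_›).mul (Module.Finite.iff_fg.1 ‹_›))
  have mul_mem (x y : L) : c x * g y ∈ lieSubmoduleMul X Y :=
    Submodule.mul_mem_mul (hcX x) (hgY y)
  obtain ⟨g', hg', hg'XY⟩ := h2.exists_isLiePrimitive_mem (lieSubmoduleMul X Y)
    (isLieTwoCocycle_wedge c hgh) fun x y => sub_mem (mul_mem x y) (mul_mem y x)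
  exact ⟨g', hg', _, this, hg'XY⟩

theorem IsTwoTrivial.exists_seq_isLiePrimitive_wedge (h2 : IsTwoTrivial K L)
    (c g : LieDerivation K L A) (hc : IsLocallyFinite (c : L →ₗ[K] A))
    (hg : IsLocallyFinite (g : L →ₗ[K] A)) :
    ∃ G : ℕ → L →ₗ[K] A, G 0 = g ∧
      ∀ k, IsLiePrimitive (wedge (c : L →ₗ[K] A) (G k)) (G (k + 1)) := by
  let S := {g : L →ₗ[K] A //
    (∃ h, IsLiePrimitive (wedge (c : L →ₗ[K] A) h) g) ∧ IsLocallyFinite g}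
  have exists_next (s : S) :
      ∃ s' : S, IsLiePrimitive (wedge (c : L →ₗ[K] A) s.1) s'.1 := by
    obtain ⟨g, ⟨h, hgh⟩, hg⟩ := s
    obtain ⟨g', hg', hfin⟩ := h2.exists_isLiePrimitive_wedge c hc hgh hg
    exact ⟨⟨g', ⟨g, hg'⟩, hfin⟩, hg'⟩
  choose next hnext using exists_next
  have isLiePrimitive_zero : IsLiePrimitive (wedge (c : L →ₗ[K] A) (0 : L →ₗ[K] A)) g :=
    fun x y => by simp [LieDerivation.apply_lie_eq_sub]
  refine ⟨fun k => (next^[k] ⟨g, ⟨0, isLiePrimitive_zero⟩, hg⟩).1, rfl, fun k => ?_⟩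
  simp only [Function.iterate_succ_apply']
  exact hnext _

end MasseySequence

section RankOne

theorem exists_apply_diag_eq_zero {R M P : Type*} [Ring R] [AddCommGroup M] [Module R M]
    [IsArtinian R M] [AddCommGroup P] [Module R P] {G : ℕ → M →ₗ[R] P} {u : ℕ → M}
    (hlt : ∀ i k, i < k → G i (u k) = 0) : ∃ i, G i (u i) = 0 := by
  by_contra! hdiag
  let F (n : ℕ) : Submodule R M := ⨅ i < n, LinearMap.ker (G i)
  have strictAnti_F : StrictAnti F := strictAnti_nat_of_succ_lt fun n => by
    refine lt_of_le_of_ne (biInf_mono fun i hi => hi.trans n.lt_succ_self) fun hF => hdiag n ?_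
    have u_mem : u n ∈ F n := by simpa [F] using fun i hi => hlt i n hi
    rw [← hF] at u_mem
    simp only [F, Submodule.mem_iInf] at u_mem
    exact u_mem n n.lt_succ_self
  exact not_strictAnti_of_wellFoundedLT F strictAnti_F

theorem apply_one_eq_zero_of_recursion {K M A : Type*} [CommRing K] [AddCommGroup M] [Module K M]
    [IsArtinian K M] [CommRing A] [IsDomain A] [Algebra K A] {G : ℕ → M →ₗ[K] A} {u : ℕ → M}
    {a : A} (ha : a ≠ 0) (hrec : ∀ i k, G (i + 1) (u (k + 2)) = a * G i (u (k + 1)))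
    (hzero : ∀ k, G 0 (u (k + 1)) = 0) : G 1 (u 1) = 0 := by
  have iterate (i j k : ℕ) : G (i + j) (u (i + k + 1)) = a ^ i * G j (u (k + 1)) := by
    induction i with
    | zero => simp
    | succ i ih =>
      rw [pow_succ', mul_assoc, ← ih, ← hrec]
      congr 2 <;> ring_nf
  obtain ⟨i, hi⟩ := exists_apply_diag_eq_zero (G := fun i => G (i + 1)) (u := fun i => u (i + 1))
    fun i k hik => by
      obtain ⟨d, rfl⟩ := Nat.exists_eq_add_of_lt hik
      have h := iterate (i + 1) 0 d
      rw [hzero, mul_zero] at h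
      convert h using 2
      ring_nf
  exact (mul_eq_zero.1 ((iterate i 1 0).symm.trans hi)).resolve_left (pow_ne_zero i ha)

variable {K : Type u} {L : Type v} [Field K] [LieRing L] [LieAlgebra K L]

theorem IsTwoTrivial.wedge_apply_eq_zero [FiniteDimensional K L] (h2 : IsTwoTrivial K L)
    {A : Type*} [CommRing A] [IsDomain A] [Algebra K A] [LieRingModule L A] [LieModule K L A]
    [IsLieActionByDerivations L A] (c g : LieDerivation K L A)
    (hc : IsLocallyFinite (c : L →ₗ[K] A)) (hg : IsLocallyFinite (g : L →ₗ[K] A))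
    {N : LieIdeal K L} (hN : ∀ n ∈ N, ∀ a : A, ⁅n, a⁆ = 0) {n m : L} (hn : n ∈ N) (hm : m ∈ N) :
    wedge (c : L →ₗ[K] A) (g : L →ₗ[K] A) n m = 0 := by
  wlog hcn : c n ≠ 0 generalizing n m
  · by_cases hcm : c m = 0
    · simp_all
    · rw [wedge_apply, ← neg_sub, neg_eq_zero]
      exact this hm hn hcm
  obtain ⟨G, hG0, hG⟩ := h2.exists_seq_isLiePrimitive_wedge c g hc hg
  have G_lie (k : ℕ) {x y : L} (hx : x ∈ N) (hy : y ∈ N) :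
      G (k + 1) ⁅x, y⁆ = c y * G k x - c x * G k y := by
    have h := hG k x y
    simp only [wedge_apply, smul_eq_mul, LieDerivation.coeFn_coe, hN x hx, hN y hy] at h
    linear_combination h
  have map_lie_eq_zero (D : LieDerivation K L A) {x y : L} (hx : x ∈ N) (hy : y ∈ N) :
      D ⁅x, y⁆ = 0 := by simp [LieDerivation.apply_lie_eq_sub, hN x hx, hN y hy]
  let u (k : ℕ) : L := (fun x => ⁅n, x⁆)^[k] m
  have u_succ (k : ℕ) : u (k + 1) = ⁅n, u k⁆ := Function.iterate_succ_apply' _ _ _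
  have u_mem (k : ℕ) : u k ∈ N := by
    cases k with
    | zero => exact hm
    | succ k => rw [u_succ]; exact lie_mem_left K L N _ _ hn
  have G_one : G 1 (u 1) = 0 := by
    refine apply_one_eq_zero_of_recursion (neg_ne_zero.2 hcn) (fun i k => ?_) fun k => ?_
    · rw [u_succ (k + 1), G_lie i hn (u_mem _), u_succ k, map_lie_eq_zero c hn (u_mem k)]
      ring
    · rw [hG0, u_succ]
      exact map_lie_eq_zero g hn (u_mem k)
  rw [u_succ, G_lie 0 hn (u_mem 0), hG0] at G_one
  simpa [u, neg_sub] using congrArg Neg.neg G_one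

end RankOne

section PolynomialAction

open MvPolynomial

variable {K E ι σ : Type*} [CommRing K] [AddCommGroup E] [Module K E] (b : Module.Basis ι K E)

/-- The copy with index `j` of `E` inside the linear forms of `K[X (i, j)]`, which is the
symmetric algebra of a direct sum of copies of `E` indexed by `σ`. -/
noncomputable def linearForm (j : σ) : E →ₗ[K] MvPolynomial (ι × σ) K :=
  b.constr K fun i => X (i, j)

theorem linearForm_basis (j : σ) (i : ι) : linearForm b j (b i) = X (i, j) :=
  b.constr_basis K _ i

theorem aeval_linearForm (φ : σ → E →ₗ[K] K) (j : σ) (e : E) :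
    aeval (fun ij : ι × σ => φ ij.2 (b ij.1)) (linearForm b j e) = φ j e := by
  suffices (aeval fun ij : ι × σ => φ ij.2 (b ij.1)).toLinearMap ∘ₗ linearForm b j = φ j from
    LinearMap.congr_fun this e
  exact b.ext fun i => by simp [linearForm_basis]

theorem derivation_ext_linearForm {D₁ D₂ : Derivation K (MvPolynomial (ι × σ) K)
    (MvPolynomial (ι × σ) K)} (h : ∀ j e, D₁ (linearForm b j e) = D₂ (linearForm b j e)) :
    D₁ = D₂ :=
  derivation_ext fun ⟨i, j⟩ => by simpa only [linearForm_basis] using h j (b i)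

/-- The derivation of `K[X (i, j)]` extending an endomorphism of `E`. -/
noncomputable def endDerivation (T : Module.End K E) :
    Derivation K (MvPolynomial (ι × σ) K) (MvPolynomial (ι × σ) K) :=
  mkDerivation K fun ij => linearForm b ij.2 (T (b ij.1))

@[simp]
theorem endDerivation_linearForm (T : Module.End K E) (j : σ) (e : E) :
    endDerivation b T (linearForm b j e) = linearForm b j (T e) := by
  suffices (endDerivation b T).toLinearMap ∘ₗ linearForm b j = linearForm b j ∘ₗ T from
    LinearMap.congr_fun this e
  exact b.ext fun i => by simp [linearForm_basis, endDerivation, mkDerivation_X]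

attribute [local instance 100] LieRing.ofAssociativeRing

/-- The action of `𝔤𝔩(E)` on `K[X (i, j)]` by derivations. -/
noncomputable def endDerivationHom (σ : Type*) : Module.End K E →ₗ⁅K⁆
    Derivation K (MvPolynomial (ι × σ) K) (MvPolynomial (ι × σ) K) where
  toFun := endDerivation b
  map_add' S T := derivation_ext_linearForm b fun j e => by simp
  map_smul' a T := derivation_ext_linearForm b fun j e => by simp
  map_lie' {S T} := derivation_ext_linearForm b fun j e => by
    simp [Derivation.commutator_apply, Ring.lie_def]

end PolynomialAction

section OneCocycles

variable {K : Type u} {L : Type v} [Field K] [LieRing L] [LieAlgebra K L]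
  {E : Type*} [AddCommGroup E] [Module K E] [LieRingModule L E] [LieModule K L E]

variable [FiniteDimensional K E]

theorem isLocallyFinite_lieDerivationMap {V : Type*} [AddCommGroup V] [Module K V]
    [LieRingModule L V] [LieModule K L V] (f : E →ₗ⁅K,L⁆ V) (γ : LieDerivation K L E) :
    IsLocallyFinite (lieDerivationMap f γ : L →ₗ[K] V) :=
  ⟨f.range, inferInstanceAs (FiniteDimensional K (LinearMap.range (f : E →ₗ[K] V))),
    fun x => ⟨γ x, rfl⟩⟩

variable [FiniteDimensional K L] {N : LieIdeal K L}

attribute [local instance 100] LieRing.ofAssociativeRing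

theorem IsTwoTrivial.dual_apply_mul_dual_apply_comm (h2 : IsTwoTrivial K L)
    (γ : LieDerivation K L E) (hN : ∀ n ∈ N, ∀ e : E, ⁅n, e⁆ = 0) {n m : L}
    (hn : n ∈ N) (hm : m ∈ N) (φ : Bool → Module.Dual K E) :
    φ true (γ n) * φ false (γ m) = φ true (γ m) * φ false (γ n) := by
  let b := Module.finBasis K E
  let P := MvPolynomial (Fin (Module.finrank K E) × Bool) K
  let ρ : L →ₗ⁅K⁆ Derivation K P P := (endDerivationHom b Bool).comp (LieModule.toEnd K L E)
  let _ := LieRingModule.compLieHom P ρ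
  let _ := LieModule.compLieHom P ρ
  have lie_eq (x : L) (p : P) : ⁅x, p⁆ = ρ x p := rfl
  have : IsLieActionByDerivations L P := ⟨fun x p q => by
    simp only [lie_eq, Derivation.leibniz, smul_eq_mul]
    ring⟩
  let form (j : Bool) : E →ₗ⁅K,L⁆ P :=
    { linearForm b j with
      map_lie' := fun {x e} => (endDerivation_linearForm b (LieModule.toEnd K L E x) j e).symm }
  have lie_P_eq_zero (x : L) (hx : x ∈ N) (p : P) : ⁅x, p⁆ = 0 := by
    have toEnd_eq_zero : LieModule.toEnd K L E x = 0 := LinearMap.ext (hN x hx)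
    rw [lie_eq, LieHom.comp_apply, toEnd_eq_zero, map_zero, Derivation.zero_apply]
  have wedge_eq_zero := h2.wedge_apply_eq_zero (lieDerivationMap (form true) γ)
    (lieDerivationMap (form false) γ) (isLocallyFinite_lieDerivationMap _ _)
    (isLocallyFinite_lieDerivationMap _ _) lie_P_eq_zero hn hm
  have linearForm_mul_eq : linearForm b true (γ n) * linearForm b false (γ m) =
      linearForm b true (γ m) * linearForm b false (γ n) := sub_eq_zero.1 wedge_eq_zero
  simpa only [map_mul, aeval_linearForm] using
    congrArg (MvPolynomial.aeval fun ij => φ ij.2 (b ij.1)) linearForm_mul_eq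

theorem IsTwoTrivial.exists_apply_eq_smul_apply (h2 : IsTwoTrivial K L) (γ : LieDerivation K L E)
    (hN : ∀ n ∈ N, ∀ e : E, ⁅n, e⁆ = 0) {n m : L} (hn : n ∈ N) (hm : m ∈ N) (hγn : γ n ≠ 0) :
    ∃ a : K, γ m = a • γ n := by
  obtain ⟨ψ, hψ⟩ : ∃ ψ : Module.Dual K E, ψ (γ n) ≠ 0 := by
    simpa using (Module.forall_dual_apply_eq_zero_iff K (γ n)).not.2 hγn
  refine ⟨ψ (γ m) / ψ (γ n), sub_eq_zero.1 ((Module.forall_dual_apply_eq_zero_iff K _).1 ?_)⟩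
  intro φ
  have h := h2.dual_apply_mul_dual_apply_comm γ hN hn hm (Bool.rec ψ φ)
  simp only at h
  rw [map_sub, map_smul, smul_eq_mul]
  field_simp
  linear_combination -h

theorem IsTwoTrivial.apply_lie_lie_eq_zero (h2 : IsTwoTrivial K L) (γ : LieDerivation K L E)
    (hN : ∀ n ∈ N, ∀ e : E, ⁅n, e⁆ = 0) (x y : L) {n : L} (hn : n ∈ N) :
    γ ⁅⁅x, y⁆, n⁆ = 0 := by
  have γ_lie (x : L) : γ ⁅x, n⁆ = ⁅x, γ n⁆ := by
    rw [LieDerivation.apply_lie_eq_sub, hN n hn, sub_zero]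
  by_cases hγn : γ n = 0
  · rw [γ_lie, hγn, lie_zero]
  have exists_eigenvalue (x : L) : ∃ a : K, ⁅x, γ n⁆ = a • γ n := by
    rw [← γ_lie]
    exact h2.exists_apply_eq_smul_apply γ hN hn (N.lie_mem hn) hγn
  obtain ⟨a, ha⟩ := exists_eigenvalue x
  obtain ⟨c, hc⟩ := exists_eigenvalue y
  rw [γ_lie, lie_lie, ha, hc, lie_smul, lie_smul, ha, hc, smul_comm, sub_self]

end OneCocycles

section IdealAction

open LieSubmodule

variable {K : Type u} {L : Type v} [Field K] [LieRing L] [LieAlgebra K L]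

theorem lie_homLieSubmodule_eq_zero {N : LieIdeal K L} {n : L} (hn : n ∈ N)
    (f : homLieSubmodule N (map (LieSubmodule.Quotient.mk' ⁅N, N⁆) N)) : ⁅n, f⁆ = 0 := by
  refine Subtype.ext (LinearMap.ext fun s => ?_)
  obtain ⟨a, ha, hfa⟩ := f.2.2 s
  have lie_f_eq_zero : ⁅n, (f : L →ₗ[K] L ⧸ ⁅N, N⁆) s⁆ = 0 := by
    rw [← hfa]
    exact (LieSubmodule.Quotient.mk_eq_zero _).2 (lie_mem_lie hn ha)
  simp [LieHom.lie_apply, lie_f_eq_zero, f.2.1 _ (lie_mem_left K L N n s hn)]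

variable [FiniteDimensional K L]

theorem IsTwoTrivial.lie_lie_mem_normalizer (h2 : IsTwoTrivial K L) (N : LieIdeal K L)
    (x y : L) {n : L} (hn : n ∈ N) : ⁅⁅x, y⁆, n⁆ ∈ (⁅N, N⁆ : LieIdeal K L).normalizer := by
  let q := LieSubmodule.Quotient.mk' (⁅N, N⁆ : LieIdeal K L)
  let X := homLieSubmodule N (map q N)
  obtain ⟨C, hNC⟩ := N.toSubmodule.exists_isCompl
  let p : L →ₗ[K] L := N.toSubmodule.subtype ∘ₗ Submodule.projectionOnto _ _ hNC
  have p_mem (s : L) : p s ∈ N := (Submodule.projectionOnto _ _ hNC s).2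
  have p_eq {m : L} (hm : m ∈ N) : p m = m :=
    congrArg Subtype.val (Submodule.projectionOnto_apply_left hNC ⟨m, hm⟩)
  let w : L →ₗ[K] L ⧸ ⁅N, N⁆ := (q : L →ₗ[K] L ⧸ ⁅N, N⁆) ∘ₗ p
  have lie_w_apply (x s : L) : ⁅x, w⁆ s = q (⁅x, p s⁆ - p ⁅x, s⁆) := by
    rw [LieHom.lie_apply, map_sub, LieModuleHom.map_lie]
    rfl
  have lie_w_mem (x : L) : ⁅x, w⁆ ∈ X := by
    refine ⟨fun m hm => ?_, fun s => ?_⟩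
    · rw [lie_w_apply, p_eq hm, p_eq (N.lie_mem hm), sub_self, map_zero]
    · rw [lie_w_apply]
      exact ⟨_, sub_mem (N.lie_mem (p_mem s)) (p_mem _), rfl⟩
  have lie_w_eq_zero : ⁅⁅⁅x, y⁆, n⁆, w⁆ = 0 :=
    congrArg Subtype.val (h2.apply_lie_lie_eq_zero (lieDerivationOfLieMem X w lie_w_mem)
      (fun m hm f => lie_homLieSubmodule_eq_zero hm f) x y hn)
  have m_mem : ⁅⁅x, y⁆, n⁆ ∈ N := N.lie_mem hn
  refine (mem_normalizer _ _).2 fun s => ?_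
  have h := lie_w_apply ⁅⁅x, y⁆, n⁆ s
  rw [lie_w_eq_zero, p_eq (lie_mem_left K L N _ _ m_mem), LinearMap.zero_apply, eq_comm,
    LieSubmodule.Quotient.mk_eq_zero] at h
  simpa only [sub_sub_cancel_left, lie_skew] using sub_mem h (lie_mem_lie m_mem (p_mem s))

theorem IsTwoTrivial.lie_le_lie_self (h2 : IsTwoTrivial K L) {D : LieIdeal K L}
    (hD : D ≤ ⁅D, D⁆) (N : LieIdeal K L) : ⁅D, N⁆ ≤ ⁅N, N⁆ := by
  have le_normalizer : ⁅D, N⁆ ≤ (⁅N, N⁆ : LieIdeal K L).normalizer :=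
    (mono_lie_left N hD).trans <|
      lie_lie_le_iff.2 fun x _ y _ _ hn => h2.lie_lie_mem_normalizer N x y hn
  refine (mono_lie_left N hD).trans <| lie_lie_le_iff.2 fun x hx y hy n hn => ?_
  rw [lie_lie]
  exact sub_mem ((mem_normalizer _ _).1 (le_normalizer (lie_mem_lie hy hn)) x)
    ((mem_normalizer _ _).1 (le_normalizer (lie_mem_lie hx hn)) y)

end IdealAction

section Semisimple

open LieAlgebra LieSubmodule

variable {K : Type*} [Field K]

section IsKilling

variable {S : Type*} [LieRing S] [LieAlgebra K S] [FiniteDimensional K S] [IsKilling K S]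

theorem exists_eq_killingForm_lie_of_cocycle {f : S →ₗ[K] S →ₗ[K] K} (hskew : ∀ x y, f x y = -f y x)
    (hcyc : ∀ x y z, f ⁅x, y⁆ z + f ⁅y, z⁆ x + f ⁅z, x⁆ y = 0) :
    ∃ d, ∀ x y, f x y = killingForm K S d ⁅x, y⁆ := by
  have nondeg := IsKilling.killingForm_nondegenerate K S
  let δ : S →ₗ[K] S :=
    (LinearMap.BilinForm.toDual (killingForm K S) nondeg).symm.toLinearMap ∘ₗ f
  have killing_δ (x y : S) : killingForm K S (δ x) y = f x y :=
    LinearMap.BilinForm.apply_toDual_symm_apply (hB := nondeg) (f x) y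
  let Δ : LieDerivation K S S :=
    { δ with
      leibniz' a b := by
        refine sub_eq_zero.1 (nondeg.1 _ fun z => ?_)
        change killingForm K S (δ ⁅a, b⁆ - (⁅a, δ b⁆ - ⁅b, δ a⁆)) z = 0
        have invariance (x y : S) : killingForm K S ⁅x, δ y⁆ z = f ⁅x, z⁆ y := by
          rw [hskew, ← killing_δ]
          exact LieModule.traceForm_apply_lie_apply' K S S x (δ y) z
        have h := hcyc a b z
        rw [← lie_skew z a, map_neg, LinearMap.neg_apply] at h
        rw [map_sub, map_sub, LinearMap.sub_apply, LinearMap.sub_apply, invariance, invariance,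
          killing_δ]
        linear_combination h }
  obtain ⟨d, hd⟩ := LieDerivation.IsKilling.exists_eq_ad Δ
  refine ⟨d, fun x y => ?_⟩
  have lie_d : ⁅d, x⁆ = δ x := by
    rw [← LieDerivation.ad_apply_apply (R := K)]
    exact LieDerivation.congr_fun hd x
  rw [← killing_δ, ← lie_d]
  exact LieModule.traceForm_apply_lie_apply K S S d x y

variable {E : Type*} [LieRing E] [LieAlgebra K E] {π : E →ₗ⁅K⁆ S} {φ : E →ₗ[K] K}

theorem exists_apply_lie_eq_killingForm_of_central (hπ : Function.Surjective π)
    (hφ : ∀ x, π x = 0 → ∀ y, φ ⁅x, y⁆ = 0) :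
    ∃ d, ∀ x y : E, φ ⁅x, y⁆ = killingForm K S d (π ⁅x, y⁆) := by
  obtain ⟨σ, hσ⟩ := (π : E →ₗ[K] S).exists_rightInverse_of_surjective (LinearMap.range_eq_top.2 hπ)
  have π_σ (s : S) : π (σ s) = s := LinearMap.congr_fun hσ s
  have φ_lie_congr {x x' : E} (hx : π x = π x') (y : E) : φ ⁅x, y⁆ = φ ⁅x', y⁆ := by
    rw [← sub_eq_zero, ← map_sub, ← sub_lie]
    exact hφ _ (by rw [map_sub, hx, sub_self]) y
  have φ_lie_skew (x y : E) : φ ⁅x, y⁆ = -φ ⁅y, x⁆ := by rw [← map_neg, lie_skew]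
  let f : S →ₗ[K] S →ₗ[K] K := LinearMap.mk₂ K (fun a b => φ ⁅σ a, σ b⁆)
    (by simp) (by simp) (by simp) (by simp)
  have f_π (x y : E) : f (π x) (π y) = φ ⁅x, y⁆ := by
    rw [← φ_lie_congr (π_σ (π x)), φ_lie_skew (σ _) y, ← φ_lie_congr (π_σ (π y)), ← φ_lie_skew]
    rfl
  obtain ⟨d, hd⟩ := exists_eq_killingForm_lie_of_cocycle (f := f) (fun _ _ => φ_lie_skew _ _)
    (hπ.forall₃.2 fun x y z => by
      rw [← LieHom.map_lie, ← LieHom.map_lie, ← LieHom.map_lie, f_π, f_π, f_π, ← map_add,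
        ← map_add, ← map_zero φ, ← neg_zero (G := E), ← lie_jacobi x y z, ← lie_skew ⁅x, y⁆,
        ← lie_skew ⁅y, z⁆, ← lie_skew ⁅z, x⁆]
      congr 1
      abel)
  exact ⟨d, fun x y => by rw [← f_π, hd, LieHom.map_lie]⟩

theorem apply_eq_zero_of_central_of_perfect (hE : ⁅(⊤ : LieIdeal K E), (⊤ : LieIdeal K E)⁆ = ⊤)
    (hπ : Function.Surjective π) (hφ : ∀ x, π x = 0 → ∀ y, φ ⁅x, y⁆ = 0) {x : E}
    (hx : π x = 0) : φ x = 0 := by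
  obtain ⟨d, hd⟩ := exists_apply_lie_eq_killingForm_of_central hπ hφ
  let p : Submodule K E := LinearMap.eqLocus φ (killingForm K S d ∘ₗ (π : E →ₗ[K] S))
  have le_p : (⁅(⊤ : LieIdeal K E), (⊤ : LieIdeal K E)⁆ : LieIdeal K E).toSubmodule ≤ p :=
    toSubmodule_lie_le_iff.2 fun x _ y _ => hd x y
  have x_mem : x ∈ p := le_p (by simp [hE])
  calc φ x = killingForm K S d (π x) := x_mem
    _ = 0 := by rw [hx, map_zero]

end IsKilling

variable {L : Type*} [LieRing L] [LieAlgebra K L]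

variable [FiniteDimensional K L]

variable [CharZero K]

theorem quotientHom_radical_comp_incl_surjective {D : LieIdeal K L}
    (hD : ⁅(⊤ : LieIdeal K L), (⊤ : LieIdeal K L)⁆ ≤ D) :
    Function.Surjective ((quotientHom (radical K L)).comp D.incl) := by
  intro s
  have hπ := quotientHom_surjective (radical K L)
  have map_eq_top : LieIdeal.map (quotientHom (radical K L)) D = ⊤ := by
    refine eq_top_iff.2 (le_trans ?_ (LieIdeal.map_mono hD))
    have map_top : LieIdeal.map (quotientHom (radical K L)) ⊤ = ⊤ := by
      rw [← LieHom.idealRange_eq_map, LieHom.idealRange_eq_top_of_surjective _ hπ]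
    rw [LieIdeal.map_bracket_eq _ hπ, map_top, lie_top_top_eq_top_of_isSemisimple]
  obtain ⟨x, hx⟩ := LieIdeal.mem_map_of_surjective hπ (map_eq_top ▸ mem_top s)
  exact ⟨x, hx⟩

theorem radical_inf_le_of_lie_le {D J : LieIdeal K L}
    (hD : ⁅(⊤ : LieIdeal K L), (⊤ : LieIdeal K L)⁆ ≤ D) (hDD : D ≤ ⁅D, D⁆)
    (hJ : ⁅D, radical K L ⊓ D⁆ ≤ J) : radical K L ⊓ D ≤ J := by
  intro x hx
  by_contra hxJ
  obtain ⟨φ, hφx, hJφ⟩ := Submodule.exists_le_ker_of_notMem (p := J.toSubmodule) hxJ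
  refine hφx (apply_eq_zero_of_central_of_perfect (φ := φ ∘ₗ D.toSubmodule.subtype) (x := ⟨x, hx.2⟩)
    (lie_top_top_eq_top_of_le_lie_self hDD) (quotientHom_radical_comp_incl_surjective hD)
    (fun n hn d => hJφ (hJ ?_)) (quotientHom_eq_zero_iff.2 hx.1))
  rw [lie_comm]
  exact lie_mem_lie ⟨quotientHom_eq_zero_iff.1 hn, n.2⟩ d.2

theorem radical_eq_bot_of_radical_inf_eq_bot {D : LieIdeal K L}
    (hD : ⁅(⊤ : LieIdeal K L), (⊤ : LieIdeal K L)⁆ ≤ D) (hRD : radical K L ⊓ D = ⊥) :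
    radical K D = ⊥ := by
  let π : D →ₗ⁅K⁆ L ⧸ radical K L := (quotientHom (radical K L)).comp D.incl
  have π_injective : Function.Injective π := by
    refine (injective_iff_map_eq_zero π).2 fun x hx => Subtype.ext ?_
    have x_mem : (x : L) ∈ radical K L ⊓ D := ⟨quotientHom_eq_zero_iff.1 hx, x.2⟩
    rwa [hRD] at x_mem
  let e := LieEquiv.ofBijective π ⟨π_injective, quotientHom_radical_comp_incl_surjective hD⟩
  have : IsKilling K D := isKilling_of_equiv e.symm
  exact radical_eq_bot

end Semisimple

section Decomposition

open LieAlgebra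

attribute [local instance 100] LieRing.ofAssociativeRing

theorem IsTwoTrivial.radical_inf_eq_bot {K : Type u} {L : Type v} [Field K] [CharZero K]
    [LieRing L] [LieAlgebra K L] [FiniteDimensional K L] (h2 : IsTwoTrivial K L)
    {D : LieIdeal K L} (hD : ⁅(⊤ : LieIdeal K L), (⊤ : LieIdeal K L)⁆ ≤ D) (hDD : D ≤ ⁅D, D⁆) :
    radical K L ⊓ D = ⊥ := by
  have : IsSolvable (radical K L ⊓ D : LieIdeal K L) :=
    (LieIdeal.solvable_iff_le_radical K L _).2 inf_le_left
  exact eq_bot_of_isSolvable_of_le_lie_self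
    (radical_inf_le_of_lie_le hD hDD (h2.lie_le_lie_self hDD _))

variable {K L : Type*} [Field K] [LieRing L] [LieAlgebra K L]

theorem exists_lieCharacter_ne_zero (h : ⁅(⊤ : LieIdeal K L), (⊤ : LieIdeal K L)⁆ ≠ ⊤) :
    ∃ χ : LieCharacter K L, χ ≠ 0 := by
  obtain ⟨t, -, ht⟩ := SetLike.exists_of_lt (lt_top_iff_ne_top.2 h)
  obtain ⟨φ, hφt, hφ⟩ := Submodule.exists_le_ker_of_notMem
    (p := (⁅(⊤ : LieIdeal K L), (⊤ : LieIdeal K L)⁆ : LieIdeal K L).toSubmodule) ht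
  let χ : LieCharacter K L :=
    { φ with
      map_lie' := fun {x y} => by
        rw [LieRing.of_associative_ring_bracket, mul_comm, sub_self]
        exact hφ (LieSubmodule.lie_mem_lie (LieSubmodule.mem_top x) (LieSubmodule.mem_top y)) }
  exact ⟨χ, fun hχ => hφt (congrArg (fun ψ : LieCharacter K L => ψ t) hχ)⟩

theorem lie_top_top_le_ker_lieCharacter (χ : LieCharacter K L) :
    ⁅(⊤ : LieIdeal K L), (⊤ : LieIdeal K L)⁆ ≤ χ.ker :=
  (LieSubmodule.lie_le_iff _ _ _).2 fun x _ y _ => LieHom.mem_ker.2 (lieCharacter_apply_lie χ x y)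

variable {χ : LieCharacter K L} {A : LieIdeal K L}

theorem exists_mem_lieCharacter_ne_zero (hA : A ≠ ⊥) (hAχ : A ⊓ χ.ker = ⊥) :
    ∃ a ∈ A, χ a ≠ 0 := by
  by_contra! h
  exact hA (le_bot_iff.1 (hAχ ▸ le_inf le_rfl fun a ha => LieHom.mem_ker.2 (h a ha)))

theorem isCompl_ker_lieCharacter (hA : A ≠ ⊥) (hAχ : A ⊓ χ.ker = ⊥) : IsCompl χ.ker A := by
  obtain ⟨a, ha, hχa⟩ := exists_mem_lieCharacter_ne_zero hA hAχ
  refine ⟨disjoint_iff.2 (inf_comm A χ.ker ▸ hAχ), codisjoint_iff.2 (eq_top_iff.2 fun x _ => ?_)⟩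
  refine (LieSubmodule.mem_sup _ _ _).2 ⟨x - (χ x / χ a) • a, ?_, (χ x / χ a) • a,
    A.smul_mem _ ha, sub_add_cancel _ _⟩
  simp [hχa]

theorem finrank_eq_one_of_inf_ker_lieCharacter (hA : A ≠ ⊥) (hAχ : A ⊓ χ.ker = ⊥) :
    Module.finrank K A = 1 := by
  obtain ⟨a, ha, hχa⟩ := exists_mem_lieCharacter_ne_zero hA hAχ
  let ψ : A →ₗ[K] K := (χ : L →ₗ[K] K) ∘ₗ A.toSubmodule.subtype
  have ψ_injective : Function.Injective ψ := (injective_iff_map_eq_zero ψ).2 fun x hx => by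
    have x_mem : (x : L) ∈ A ⊓ χ.ker := ⟨x.2, LieHom.mem_ker.2 hx⟩
    rw [hAχ] at x_mem
    exact Subtype.ext x_mem
  have ψ_surjective : Function.Surjective ψ :=
    LinearMap.surjective fun h => hχa (LinearMap.congr_fun h ⟨a, ha⟩)
  rw [(LinearEquiv.ofBijective ψ ⟨ψ_injective, ψ_surjective⟩).finrank_eq, Module.finrank_self]

end Decomposition

/-- **A converse to the Second Whitehead Lemma.**
A finite-dimensional Lie algebra over a field of characteristic zero whose second cohomology
vanishes in every finite-dimensional module is one-dimensional, semisimple, or the direct sum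
of a semisimple Lie algebra and a one-dimensional Lie algebra. -/
theorem converse_second_whitehead_lemma
    (K : Type u) (L : Type v) [Field K] [CharZero K]
    [LieRing L] [LieAlgebra K L] [FiniteDimensional K L]
    (h2 : IsTwoTrivial K L) :
    Module.finrank K L = 1 ∨ LieAlgebra.radical K L = ⊥ ∨
      ∃ S A : LieIdeal K L, IsCompl S A ∧
        LieAlgebra.radical K ↥S = ⊥ ∧ Module.finrank K ↥A = 1 := by
  right
  by_cases hL : ⁅(⊤ : LieIdeal K L), (⊤ : LieIdeal K L)⁆ = ⊤
  · left
    simpa only [inf_top_eq] using h2.radical_inf_eq_bot le_top hL.ge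
  obtain ⟨χ, hχ⟩ := exists_lieCharacter_ne_zero hL
  have le_ker := lie_top_top_le_ker_lieCharacter χ
  have radical_inf_ker := h2.radical_inf_eq_bot le_ker (h2.ker_lieCharacter_le hχ)
  refine or_iff_not_imp_left.2 fun radical_ne_bot => ?_
  exact ⟨_, _, isCompl_ker_lieCharacter radical_ne_bot radical_inf_ker,
    radical_eq_bot_of_radical_inf_eq_bot le_ker radical_inf_ker,
    finrank_eq_one_of_inf_ker_lieCharacter radical_ne_bot radical_inf_ker⟩
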